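/- arXiv:2112.07506 — 2 statements merged into one kernel-verified Lean document; each statement's English description precedes it below -/
import Mathlib

section
/- A partition p (of an upper row of k points and a lower row of k points) is projective, i.e. satisfies p² = p and p* = p (where composition is vertical concatenation with loops removed and * is vertical reflection), if and only if there exists a partition r ∈ P(k, l) for some l such that p = r*r. -/
attribute [local instance] Classical.propDecidable

namespace Partitions

/-- A partition with upper row indexed by `α` and lower row indexed by `β`,
modeled as an equivalence relation (set partition) on the disjoint union. -/
abbrev Partn (α β : Type) := Setoid (α ⊕ β)

variable {α β γ α' β' : Type}

/-- Reflection across the horizontal axis: swap upper and lower rows. -/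
def reflP (p : Partn α β) : Partn β α := Setoid.comap Sum.swap p

/-- Inclusion of the two-row diagram of the top partition into the three-row diagram. -/
def iTop : α ⊕ β → α ⊕ β ⊕ γ := Sum.map id Sum.inl

/-- Inclusion of the two-row diagram of the bottom partition into the three-row diagram. -/
def iBot (α : Type) {β γ : Type} : β ⊕ γ → α ⊕ β ⊕ γ := Sum.inr

/-- Inclusion of the outer (top and bottom) rows into the three-row diagram. -/
def iOut : α ⊕ γ → α ⊕ β ⊕ γ := Sum.map id Sum.inr

/-- Inclusion of the middle row into the three-row diagram. -/
def iMid (α : Type) {β : Type} (γ : Type) (b : β) : α ⊕ β ⊕ γ := Sum.inr (Sum.inl b)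

/-- The equivalence relation generated on the three-row diagram when stacking
`p` (with rows `α`, `β`) on top of `q` (with rows `β`, `γ`). -/
def glue (q : Partn β γ) (p : Partn α β) : Setoid (α ⊕ β ⊕ γ) :=
  Relation.EqvGen.setoid (fun x y =>
    (∃ u v, p.r u v ∧ x = iTop u ∧ y = iTop v) ∨
    (∃ u v, q.r u v ∧ x = iBot α u ∧ y = iBot α v))

/-- Vertical concatenation: `p` on top, `q` below; restrict the glued relation to
the outer rows. -/
def vcomp (q : Partn β γ) (p : Partn α β) : Partn α γ :=
  Setoid.comap iOut (glue q p)

/-- A projective partition: `p² = p = p*`. -/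
def Projective (p : Partn α α) : Prop := vcomp p p = p ∧ reflP p = p

/-- A middle point lying on a removed loop: it is connected to no outer point. -/
def IsLoopPt (q : Partn β γ) (p : Partn α β) (b : β) : Prop :=
  ∀ x : α ⊕ γ, ¬ (glue q p).r (iMid α γ b) (iOut x)

/-- The number of removed loops `rl(q, p)` in the vertical concatenation. -/
noncomputable def rl (q : Partn β γ) (p : Partn α β) : ℕ :=
  Nat.card (Quotient (Setoid.comap
    (fun b : {b : β // IsLoopPt q p b} => iMid α γ b.1) (glue q p)))

/-- The disjoint union of two set partitions. -/
def sumSetoid (p : Setoid α) (q : Setoid β) : Setoid (α ⊕ β) :=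
  ⟨Sum.LiftRel p.r q.r, by
    refine ⟨?_, ?_, ?_⟩
    · rintro (a | b)
      · exact .inl (p.iseqv.refl a)
      · exact .inr (q.iseqv.refl b)
    · rintro _ _ (h | h)
      · exact .inl (p.iseqv.symm h)
      · exact .inr (q.iseqv.symm h)
    · rintro _ _ _ (h | h) h₂
      · cases h₂ with
        | inl h₂ => exact .inl (p.iseqv.trans h h₂)
      · cases h₂ with
        | inr h₂ => exact .inr (q.iseqv.trans h h₂)⟩

/-- Horizontal concatenation `p ⊙ q` of partitions. -/
def hconcat (p : Partn α β) (q : Partn α' β') : Partn (α ⊕ α') (β ⊕ β') :=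
  Setoid.comap (Equiv.sumSumSumComm α α' β β') (sumSetoid p q)

/-- Number of through-blocks `t(p)`: blocks containing both an upper and a lower point. -/
noncomputable def throughCount (p : Partn α β) : ℕ :=
  Nat.card {c : Quotient p //
    (∃ a : α, Quotient.mk p (Sum.inl a) = c) ∧ ∃ b : β, Quotient.mk p (Sum.inr b) = c}

/-- `δ_p(i, j)`: `1` if the indices are constant on each block of `p`, `0` otherwise. -/
noncomputable def deltaP (N : ℕ) (p : Partn α β) (f : α → Fin N) (g : β → Fin N) : ℂ :=
  if ∀ x y, p.r x y → Sum.elim f g x = Sum.elim f g y then 1 else 0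

/-- The matrix of the linear map `T_p : (ℂ^N)^{⊗α} → (ℂ^N)^{⊗β}` in the canonical bases. -/
noncomputable def partMatrix (N : ℕ) (p : Partn α β) :
    Matrix (β → Fin N) (α → Fin N) ℂ :=
  fun g f => deltaP N p f g

/-- The identity partition `|` in `P(1,1)` (one block joining the two points). -/
def identP : Partn (Fin 1) (Fin 1) := ⊤

/-- Auxiliary: points are related when their images under `f` are `s`-related and they
have the same colour or lie in the saturated set `T`. -/
def colSetoid {X Y : Type} (s : Setoid X) (T : X → Prop) (hT : ∀ x y, s.r x y → T x → T y)
    (f : Y → X) (c : Y → ℕ) : Setoid Y where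
  r x y := s.r (f x) (f y) ∧ (c x = c y ∨ T (f x))
  iseqv := by
    refine ⟨fun x => ⟨s.iseqv.refl _, Or.inl rfl⟩, ?_, ?_⟩
    · rintro x y ⟨h, h'⟩
      refine ⟨s.iseqv.symm h, ?_⟩
      rcases h' with h' | h'
      · exact Or.inl h'.symm
      · exact Or.inr (hT _ _ h h')
    · rintro x y z ⟨h, h'⟩ ⟨g, g'⟩
      refine ⟨s.iseqv.trans h g, ?_⟩
      rcases h' with h' | h'
      · rcases g' with g' | g'
        · exact Or.inl (h'.trans g')
        · exact Or.inr (hT _ _ (s.iseqv.symm h) g')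
      · exact Or.inr h'

theorem glue_le (q : Partn β γ) (p : Partn α β) (S : Setoid (α ⊕ β ⊕ γ))
    (hp : ∀ u v, p.r u v → S.r (iTop u) (iTop v))
    (hq : ∀ u v, q.r u v → S.r (iBot α u) (iBot α v)) {x y}
    (h : (glue q p).r x y) : S.r x y := by
  have : glue q p ≤ S := by
    apply Setoid.eqvGen_le
    rintro x y (⟨u, v, h, rfl, rfl⟩ | ⟨u, v, h, rfl, rfl⟩)
    · exact hp _ _ h
    · exact hq _ _ h
  exact this h

theorem glue_top (q : Partn β γ) (p : Partn α β) {u v} (h : p.r u v) :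
    (glue q p).r (iTop u) (iTop v) :=
  Relation.EqvGen.rel _ _ (Or.inl ⟨u, v, h, rfl, rfl⟩)

theorem glue_bot (q : Partn β γ) (p : Partn α β) {u v} (h : q.r u v) :
    (glue q p).r (iBot α u) (iBot α v) :=
  Relation.EqvGen.rel _ _ (Or.inr ⟨u, v, h, rfl, rfl⟩)

/-- The explicit form of `r* r`. -/
def foldP (s : Setoid α) (T : α → Prop) (hT : ∀ x y, s.r x y → T x → T y) : Partn α α :=
  colSetoid s T hT (Sum.elim id id) (Sum.elim (fun _ => 0) (fun _ => 1))

theorem foldP_projective (s : Setoid α) (T : α → Prop) (hT : ∀ x y, s.r x y → T x → T y) :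
    Projective (foldP s T hT) := by
  constructor
  · apply Setoid.ext
    intro x y
    constructor
    · intro h
      have h2 := glue_le _ _ (colSetoid s T hT (Sum.elim id (Sum.elim id id))
        (Sum.elim (fun _ => 0) (Sum.elim (fun _ => 1) (fun _ => 2)))) ?_ ?_ h
      · rcases x with x | x <;> rcases y with y | y <;>
          exact ⟨h2.1, h2.2.imp (by simp [iOut]) id⟩
      · rintro (u | u) (v | v) h <;> exact ⟨h.1, h.2.imp (by simp [iTop]) id⟩
      · rintro (u | u) (v | v) h <;> exact ⟨h.1, h.2.imp (by simp [iBot]) id⟩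
    · intro h
      have key : ∀ a b, s.r a b → T a →
          (glue (foldP s T hT) (foldP s T hT)).r (Sum.inl a) (Sum.inr (Sum.inr b)) := by
        intro a b hab ha
        have h1 := glue_top (foldP s T hT) (foldP s T hT) (u := Sum.inl a) (v := Sum.inr a)
          ⟨s.iseqv.refl _, Or.inr ha⟩
        have h2 := glue_bot (foldP s T hT) (foldP s T hT) (u := Sum.inl a) (v := Sum.inr b)
          ⟨hab, Or.inr ha⟩
        exact Setoid.trans' _ h1 h2
      rcases x with x | x <;> rcases y with y | y
      · exact glue_top (foldP s T hT) (foldP s T hT) h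
      · obtain ⟨h, h'⟩ := h
        have h' : T x := by simpa using h'
        exact key x y h h'
      · obtain ⟨h, h'⟩ := h
        have h' : T x := by simpa using h'
        exact Setoid.symm' _ (key y x (s.iseqv.symm h) (hT _ _ h h'))
      · exact glue_bot (foldP s T hT) (foldP s T hT) h
  · apply Setoid.ext
    rintro (x | x) (y | y) <;>
      exact ⟨fun h => ⟨h.1, h.2.imp (by simp) id⟩, fun h => ⟨h.1, h.2.imp (by simp) id⟩⟩

theorem sat_through (r : Partn α β) (x y : α ⊕ β) (h : r.r x y)
    (hx : ∃ b : β, r.r x (Sum.inr b)) : ∃ b : β, r.r y (Sum.inr b) := by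
  obtain ⟨b, hb⟩ := hx
  exact ⟨b, r.iseqv.trans (r.iseqv.symm h) hb⟩

theorem vcomp_reflP_eq (r : Partn α β) :
    vcomp (reflP r) r = foldP (Setoid.comap Sum.inl r) (fun a => ∃ b : β, r.r (Sum.inl a) (Sum.inr b))
      (fun _ _ h => sat_through r _ _ h) := by
  apply Setoid.ext
  intro x y
  constructor
  · intro h
    have h2 := glue_le _ _ (colSetoid r (fun x => ∃ b : β, r.r x (Sum.inr b)) (sat_through r)
      (Sum.elim Sum.inl (Sum.elim Sum.inr Sum.inl))
      (Sum.elim (fun _ => 0) (Sum.elim (fun _ => 2) (fun _ => 1)))) ?_ ?_ h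
    · rcases x with x | x <;> rcases y with y | y <;> exact h2
    · rintro (u | u) (v | v) h
      · exact ⟨h, Or.inl rfl⟩
      · exact ⟨h, Or.inr ⟨v, h⟩⟩
      · exact ⟨h, Or.inr ⟨u, r.iseqv.refl _⟩⟩
      · exact ⟨h, Or.inl rfl⟩
    · rintro (u | u) (v | v) h
      · exact ⟨h, Or.inl rfl⟩
      · exact ⟨h, Or.inr ⟨u, r.iseqv.refl _⟩⟩
      · exact ⟨h, Or.inr ⟨v, h⟩⟩
      · exact ⟨h, Or.inl rfl⟩
  · intro h
    have key : ∀ a a', r.r (Sum.inl a) (Sum.inl a') → (∃ b : β, r.r (Sum.inl a) (Sum.inr b)) →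
        (glue (reflP r) r).r (Sum.inl a) (Sum.inr (Sum.inr a')) := by
      rintro a a' haa ⟨b, hb⟩
      have h1 := glue_top (reflP r) r hb
      have h2 := glue_bot (reflP r) r (u := Sum.inl b) (v := Sum.inr a')
        (r.iseqv.trans (r.iseqv.symm hb) haa)
      exact Setoid.trans' _ h1 h2
    rcases x with x | x <;> rcases y with y | y
    · exact glue_top (reflP r) r h.1
    · obtain ⟨h, h'⟩ := h
      exact key x y h (h'.resolve_left (by simp))
    · obtain ⟨h, h'⟩ := h
      exact Setoid.symm' _ (key y x (r.iseqv.symm h)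
        (sat_through r _ _ h (h'.resolve_left (by simp))))
    · exact glue_bot (reflP r) r (u := Sum.inr x) (v := Sum.inr y) h.1

/-- A partition `p ∈ P(k,k)` is projective (`p² = p = p*`) if and only if
`p = r* r` for some partition `r ∈ P(k, l)`. -/
theorem projective_iff_exists_reflP_vcomp (k : ℕ) (p : Partn (Fin k) (Fin k)) :
    Projective p ↔ ∃ (l : ℕ) (r : Partn (Fin k) (Fin l)), vcomp (reflP r) r = p := by
  constructor
  · rintro ⟨h1, h2⟩
    exact ⟨k, p, by rw [h2, h1]⟩
  · rintro ⟨l, r, rfl⟩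
    rw [vcomp_reflP_eq]
    exact foldP_projective _ _ _

end Partitions
end

section
/- Let π : A → B be a surjective morphism of Hopf *-algebras with S_A² = id, and let (C, ◁, γ) be a B-Yetter-Drinfeld algebra: C is a right B-comodule *-algebra via γ and a right B-module *-algebra via ◁, satisfying γ(c ◁ b) = (c₍₀₎ ◁ b₍₂₎) ⊗ S_B(b₍₁₎) c₍₁₎ b₍₃₎. Define on the induced algebra Ind(C) ⊆ C ⊗ A the operation (c ⊗ a') ◁' a = (c ◁ π(a₍₂₎)) ⊗ S_A(a₍₁₎) a' a₍₃₎. Then ◁' maps Ind(C) ⊗ A into Ind(C), makes Ind(C) a right A-module algebra, and (Ind(C), ◁', id ⊗ Δ_A) satisfies the Yetter-Drinfeld condition over A. Moreover, if (C, ◁, γ) is braided commutative (c c' = c'₍₀₎ (c ◁ c'₍₁₎)), then so is (Ind(C), ◁', id ⊗ Δ_A). -/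
open scoped TensorProduct

noncomputable section

/-- The star operation on `M ⊗[ℂ] N`, `a ⊗ b ↦ star a ⊗ star b` (an additive map,
conjugate-linear over `ℂ`). -/
def starT (M N : Type) [AddCommGroup M] [Module ℂ M] [StarAddMonoid M]
    [StarModule ℂ M] [AddCommGroup N] [Module ℂ N] [StarAddMonoid N] [StarModule ℂ N] :
    M ⊗[ℂ] N →+ M ⊗[ℂ] N :=
  TensorProduct.liftAddHom
    { toFun := fun a =>
        { toFun := fun b => star a ⊗ₜ[ℂ] star b
          map_zero' := by simp
          map_add' := fun x y => by simp [star_add, TensorProduct.tmul_add] }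
      map_zero' := by ext b; simp
      map_add' := fun x y => by ext b; simp [star_add, TensorProduct.add_tmul] }
    (fun c a b => by
      simp only [AddMonoidHom.coe_mk, ZeroHom.coe_mk, star_smul]
      rw [TensorProduct.smul_tmul])

variable (A : Type) [Ring A] [HopfAlgebra ℂ A]
variable (B : Type) [Ring B] [HopfAlgebra ℂ B]
variable (C : Type) [Ring C] [Algebra ℂ C]

/-- The cotensor product `Ind(C) = C □_B A` inside `C ⊗ A`. -/
def IndSub (π : A →ₐ[ℂ] B) (γ : C →ₐ[ℂ] C ⊗[ℂ] B) : Submodule ℂ (C ⊗[ℂ] A) :=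
  LinearMap.eqLocus
    ((TensorProduct.assoc ℂ C B A).toLinearMap ∘ₗ
      TensorProduct.map γ.toLinearMap LinearMap.id)
    (TensorProduct.map LinearMap.id
      (TensorProduct.map π.toLinearMap LinearMap.id ∘ₗ Coalgebra.comul (R := ℂ)))

/-- The rearranged iterated comultiplication `a ↦ a₍₂₎ ⊗ (a₍₁₎ ⊗ a₍₃₎)`. -/
def comulTwo : A →ₗ[ℂ] A ⊗[ℂ] (A ⊗[ℂ] A) :=
  (TensorProduct.leftComm ℂ A A A).toLinearMap ∘ₗ
    TensorProduct.map LinearMap.id (Coalgebra.comul (R := ℂ)) ∘ₗ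
    Coalgebra.comul (R := ℂ)

/-- The induced action on `C ⊗ A`:
`(c ⊗ a') ◁' a = (c ◁ π(a₍₂₎)) ⊗ S_A(a₍₁₎) a' a₍₃₎`. -/
def actInd (π : A →ₐ[ℂ] B) (actC : C →ₗ[ℂ] B →ₗ[ℂ] C)
    (x : C ⊗[ℂ] A) (a : A) : C ⊗[ℂ] A :=
  (TensorProduct.map
      (TensorProduct.lift actC ∘ₗ TensorProduct.map LinearMap.id π.toLinearMap)
      (LinearMap.mul' ℂ A ∘ₗ
        TensorProduct.map (HopfAlgebra.antipode (R := ℂ)) (LinearMap.mul' ℂ A) ∘ₗ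
        (TensorProduct.leftComm ℂ A A A).toLinearMap) ∘ₗ
    (TensorProduct.tensorTensorTensorComm ℂ C A A (A ⊗[ℂ] A)).toLinearMap ∘ₗ
    TensorProduct.map LinearMap.id (comulTwo A))
    (x ⊗ₜ a)

section MatrixCoefficients

variable {H : Type} [Ring H] [HopfAlgebra ℂ H]

/-- A finite matrix of elements of `H` which is comultiplicative. -/
def IsMC {n : ℕ} (u : Fin n → Fin n → H) : Prop :=
  (∀ i j, Coalgebra.comul (R := ℂ) (u i j) = ∑ k, u i k ⊗ₜ[ℂ] u k j) ∧
  (∀ i j, Coalgebra.counit (R := ℂ) (u i j) = if i = j then 1 else 0)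

theorem isMC_exists_subspace (a : H) : ∃ V : Submodule ℂ H, V.FG ∧ a ∈ V ∧
    ∀ v ∈ V, Coalgebra.comul (R := ℂ) v ∈
      LinearMap.range (TensorProduct.map V.subtype (LinearMap.id : H →ₗ[ℂ] H)) := by
  classical
  let b := Module.Free.chooseBasis ℂ H
  obtain ⟨w, hw⟩ := TensorProduct.eq_repr_basis_right b (Coalgebra.comul (R := ℂ) a)
  rw [Finsupp.sum] at hw
  refine ⟨Submodule.span ℂ (w.support.image w : Finset H), ⟨_, rfl⟩, ?_, ?_⟩
  · have h := Coalgebra.lTensor_counit_comul (R := ℂ) a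
    rw [← hw] at h
    have h2 := congrArg (TensorProduct.rid ℂ H) h
    simp only [map_sum, LinearMap.lTensor_tmul, TensorProduct.rid_tmul, one_smul] at h2
    rw [← h2]
    refine Submodule.sum_mem _ fun i hi => Submodule.smul_mem _ _ (Submodule.subset_span ?_)
    simpa using ⟨i, by simpa using hi, rfl⟩
  · intro v hv
    induction hv using Submodule.span_induction with
    | zero => simp
    | add x y _ _ hx hy => rw [map_add]; exact Submodule.add_mem _ hx hy
    | smul c x _ hx => rw [map_smul]; exact Submodule.smul_mem _ _ hx
    | mem x hx =>
      simp only [Finset.coe_image, Set.mem_image, Finset.mem_coe] at hx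
      obtain ⟨i, hi, rfl⟩ := hx
      have hco := Coalgebra.coassoc_apply (R := ℂ) a
      rw [← hw] at hco
      have h2 := congrArg (TensorProduct.map (LinearMap.id : H →ₗ[ℂ] H)
        ((TensorProduct.rid ℂ H).toLinearMap ∘ₗ TensorProduct.map
          (LinearMap.id : H →ₗ[ℂ] H) (b.coord i))) hco
      simp only [map_sum, LinearMap.rTensor_tmul, LinearMap.lTensor_tmul,
        TensorProduct.map_tmul, LinearMap.id_apply] at h2
      have key : ∀ (k : _) (z : H ⊗[ℂ] H), (TensorProduct.map (LinearMap.id : H →ₗ[ℂ] H)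
        ((TensorProduct.rid ℂ H).toLinearMap ∘ₗ TensorProduct.map
          (LinearMap.id : H →ₗ[ℂ] H) (b.coord i))) (TensorProduct.assoc ℂ H H H (z ⊗ₜ b k))
          = (if k = i then (1:ℂ) else 0) • z := by
        intro k z
        induction z using TensorProduct.induction_on with
        | zero => simp
        | add x y hx hy => simp only [TensorProduct.add_tmul, map_add, hx, hy, smul_add]
        | tmul x y =>
          simp only [TensorProduct.assoc_tmul, TensorProduct.map_tmul, LinearMap.comp_apply,
            LinearMap.id_apply, LinearEquiv.coe_coe, TensorProduct.rid_tmul,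
            Module.Basis.coord_apply, Module.Basis.repr_self, Finsupp.single_apply,
            TensorProduct.tmul_smul]
      simp only [key, ite_smul, one_smul, zero_smul, Finset.sum_ite_eq', hi, if_true] at h2
      rw [h2]
      refine Submodule.sum_mem _ fun k hk => ?_
      exact ⟨(⟨w k, Submodule.subset_span (by simpa using ⟨k, by simpa using hk, rfl⟩)⟩ :
        Submodule.span ℂ (w.support.image w : Finset H)) ⊗ₜ
        ((TensorProduct.rid ℂ H).toLinearMap ∘ₗ TensorProduct.map
          (LinearMap.id : H →ₗ[ℂ] H) (b.coord i)) (Coalgebra.comul (R := ℂ) (b k)),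
        TensorProduct.map_tmul _ _ _ _⟩

theorem isMC_exists (a : H) : ∃ (n : ℕ) (u : Fin n → Fin n → H) (s : Fin n → Fin n → ℂ),
    IsMC u ∧ a = ∑ i, ∑ j, s i j • u i j := by
  classical
  obtain ⟨V, hfg, haV, hV⟩ := isMC_exists_subspace a
  have : Module.Finite ℂ V := Module.Finite.iff_fg.mpr hfg
  let v := Module.finBasis ℂ V
  have hex : ∀ j, ∃ u : Fin _ → H, Coalgebra.comul (R := ℂ) (v j : H) =
      ∑ i, (v i : H) ⊗ₜ[ℂ] u i := by
    intro j
    obtain ⟨t, ht⟩ := hV (v j) (v j).2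
    obtain ⟨c, hc⟩ := TensorProduct.eq_repr_basis_left v t
    refine ⟨fun i => c i, ?_⟩
    rw [← ht, ← hc, Finsupp.sum_fintype _ _ (by simp), map_sum]
    simp
  choose u hu using hex
  -- extended coordinate functionals
  have hf : ∀ k, ∃ f : H →ₗ[ℂ] ℂ, ∀ i, f (v i) = if i = k then 1 else 0 := by
    intro k
    obtain ⟨f, hf⟩ := LinearMap.exists_extend (v.coord k)
    refine ⟨f, fun i => ?_⟩
    have := LinearMap.congr_fun hf (v i)
    simpa [Finsupp.single_apply] using this
  choose f hf using hf
  have hv : ∀ j, (v j : H) = ∑ i, Coalgebra.counit (R := ℂ) (v i : H) • u j i := by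
    intro j
    have h := Coalgebra.rTensor_counit_comul (R := ℂ) (v j : H)
    rw [hu] at h
    simpa using (congrArg (TensorProduct.lid ℂ H) h).symm
  refine ⟨_, fun i j => u j i, fun i j => Coalgebra.counit (R := ℂ) (v i : H) *
    v.repr ⟨a, haV⟩ j, ⟨?_, ?_⟩, ?_⟩
  · intro k j
    have hco := Coalgebra.coassoc_apply (R := ℂ) (v j : H)
    rw [hu] at hco
    simp only [map_sum, LinearMap.rTensor_tmul, LinearMap.lTensor_tmul, hu,
      TensorProduct.sum_tmul, TensorProduct.assoc_tmul] at hco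
    have h2 := congrArg ((TensorProduct.lid ℂ (H ⊗[ℂ] H)).toLinearMap ∘ₗ
      TensorProduct.map (f k) LinearMap.id) hco
    simp only [map_sum, LinearMap.comp_apply, TensorProduct.map_tmul, hf, LinearMap.id_apply,
      LinearEquiv.coe_coe, TensorProduct.lid_tmul, ite_smul, one_smul, zero_smul,
      Finset.sum_ite_eq', Finset.mem_univ, if_true] at h2
    exact h2.symm
  · intro i j
    have h := Coalgebra.lTensor_counit_comul (R := ℂ) (v j : H)
    rw [hu] at h
    have h2 := congrArg (f i ∘ₗ (TensorProduct.rid ℂ H).toLinearMap) h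
    simp [hf] at h2
    simp only [h2, eq_comm]
  · have h1 : a = ∑ j, v.repr ⟨a, haV⟩ j • (v j : H) := by
      have := congrArg V.subtype (v.sum_repr ⟨a, haV⟩)
      simp only [map_sum, map_smul, Submodule.subtype_apply] at this
      exact this.symm
    conv_lhs => rw [h1]
    rw [Finset.sum_comm]
    refine Finset.sum_congr rfl fun j _ => ?_
    conv_lhs => rw [hv j]
    simp only [Finset.smul_sum, smul_smul, mul_comm]

theorem isMC_ext {M : Type} [AddCommGroup M] [Module ℂ M] {f g : H →ₗ[ℂ] M}
    (h : ∀ (n : ℕ) (u : Fin n → Fin n → H), IsMC u → ∀ i j, f (u i j) = g (u i j)) (a : H) :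
    f a = g a := by
  obtain ⟨n, u, s, hu, rfl⟩ := isMC_exists a
  simp [h n u hu]

theorem IsMC.antipode_mul {n : ℕ} {u : Fin n → Fin n → H} (hu : IsMC u) (i j : Fin n) :
    ∑ k, HopfAlgebra.antipode (R := ℂ) (u i k) * u k j = if i = j then 1 else 0 := by
  have := HopfAlgebra.mul_antipode_rTensor_comul_apply (R := ℂ) (u i j)
  rw [hu.1, hu.2] at this
  simpa [apply_ite] using this

theorem IsMC.mul_antipode {n : ℕ} {u : Fin n → Fin n → H} (hu : IsMC u) (i j : Fin n) :
    ∑ k, u i k * HopfAlgebra.antipode (R := ℂ) (u k j) = if i = j then 1 else 0 := by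
  have := HopfAlgebra.mul_antipode_lTensor_comul_apply (R := ℂ) (u i j)
  rw [hu.1, hu.2] at this
  simpa [apply_ite] using this

theorem IsMC.comul_antipode {n : ℕ} {u : Fin n → Fin n → H} (hu : IsMC u) (i j : Fin n) :
    Coalgebra.comul (R := ℂ) (HopfAlgebra.antipode (R := ℂ) (u i j)) =
      ∑ k, HopfAlgebra.antipode (R := ℂ) (u k j) ⊗ₜ[ℂ]
        HopfAlgebra.antipode (R := ℂ) (u i k) := by
  classical
  let W : Matrix (Fin n) (Fin n) (H ⊗[ℂ] H) := Matrix.of fun i j => Coalgebra.comul (R := ℂ) (u i j)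
  let L : Matrix (Fin n) (Fin n) (H ⊗[ℂ] H) := Matrix.of fun i j =>
    Coalgebra.comul (R := ℂ) (HopfAlgebra.antipode (R := ℂ) (u i j))
  let R : Matrix (Fin n) (Fin n) (H ⊗[ℂ] H) := Matrix.of fun i j =>
    ∑ k, HopfAlgebra.antipode (R := ℂ) (u k j) ⊗ₜ[ℂ] HopfAlgebra.antipode (R := ℂ) (u i k)
  have h1 : L * W = 1 := by
    ext i j
    simp only [Matrix.mul_apply, Matrix.of_apply, L, W, ← Bialgebra.comul_mul, ← map_sum, hu.antipode_mul,
      Matrix.one_apply]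
    split_ifs <;> simp
  have h2 : W * R = 1 := by
    ext i j
    simp only [Matrix.mul_apply, Matrix.of_apply, W, R, hu.1, Finset.sum_mul_sum,
      Algebra.TensorProduct.tmul_mul_tmul, Matrix.one_apply]
    have : ∀ k l m, (u i l * HopfAlgebra.antipode (R := ℂ) (u m j)) ⊗ₜ[ℂ]
      (u l k * HopfAlgebra.antipode (R := ℂ) (u k m)) = 
      TensorProduct.mk ℂ H H (u i l * HopfAlgebra.antipode (R := ℂ) (u m j)) 
      (u l k * HopfAlgebra.antipode (R := ℂ) (u k m)) := fun _ _ _ => rfl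
    rw [Finset.sum_comm]
    simp only [this]
    calc _ = ∑ l, ∑ m, TensorProduct.mk ℂ H H (u i l * HopfAlgebra.antipode (R := ℂ) (u m j)) 
              (∑ k, u l k * HopfAlgebra.antipode (R := ℂ) (u k m)) := by
            refine Finset.sum_congr rfl fun l _ => ?_
            rw [Finset.sum_comm]
            simp only [map_sum]
      _ = _ := by
        simp only [hu.mul_antipode]
        have : ∀ l m, TensorProduct.mk ℂ H H (u i l * HopfAlgebra.antipode (R := ℂ) (u m j))
          (if l = m then 1 else 0) = if l = m then 
          (u i l * HopfAlgebra.antipode (R := ℂ) (u m j)) ⊗ₜ 1 else 0 := by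
          intro l m; split_ifs <;> simp
        simp only [this, Finset.sum_ite_eq, Finset.mem_univ, if_true, ← TensorProduct.sum_tmul,
          hu.mul_antipode]
        split_ifs <;> simp [Algebra.TensorProduct.one_def]
  have h3 : L = R := left_inv_eq_right_inv h1 h2
  exact congrFun (congrFun h3 i) j

theorem IsMC.comulTwo {n : ℕ} {u : Fin n → Fin n → H} (hu : IsMC u) (i j : Fin n) :
    comulTwo H (u i j) = ∑ k, ∑ l, u k l ⊗ₜ[ℂ] (u i k ⊗ₜ[ℂ] u l j) := by
  simp [_root_.comulTwo, hu.1, TensorProduct.tmul_sum]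

end MatrixCoefficients

section YD

/-- `(x ⊗ d) ⊗ (q ⊗ (p ⊗ r)) ↦ (x ◁ q) ⊗ S(p) d r`. -/
def ydMap {X H : Type} [AddCommGroup X] [Module ℂ X] [Ring H] [HopfAlgebra ℂ H]
    (act : X →ₗ[ℂ] H →ₗ[ℂ] X) :
    (X ⊗[ℂ] H) ⊗[ℂ] (H ⊗[ℂ] (H ⊗[ℂ] H)) →ₗ[ℂ] X ⊗[ℂ] H :=
  TensorProduct.map (TensorProduct.lift act)
      (LinearMap.mul' ℂ H ∘ₗ
        TensorProduct.map (HopfAlgebra.antipode (R := ℂ)) (LinearMap.mul' ℂ H) ∘ₗ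
        (TensorProduct.leftComm ℂ H H H).toLinearMap) ∘ₗ
    (TensorProduct.tensorTensorTensorComm ℂ X H H (H ⊗[ℂ] H)).toLinearMap

theorem ydMap_tmul {X H : Type} [AddCommGroup X] [Module ℂ X] [Ring H] [HopfAlgebra ℂ H]
    (act : X →ₗ[ℂ] H →ₗ[ℂ] X) (x : X) (d p q r : H) :
    ydMap act ((x ⊗ₜ d) ⊗ₜ (q ⊗ₜ (p ⊗ₜ r))) =
      act x q ⊗ₜ (HopfAlgebra.antipode (R := ℂ) p * d * r) := by
  simp [ydMap, mul_assoc]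

/-- any element of a tensor product as a `Fin`-indexed sum. -/
theorem exists_fin_tmul {X Y : Type} [AddCommGroup X] [Module ℂ X] [AddCommGroup Y]
    [Module ℂ Y] (t : X ⊗[ℂ] Y) :
    ∃ (m : ℕ) (x : Fin m → X) (y : Fin m → Y), t = ∑ i, x i ⊗ₜ[ℂ] y i := by
  obtain ⟨s, hs⟩ := TensorProduct.exists_finset t
  refine ⟨s.card, fun i => (s.equivFin.symm i).1.1, fun i => (s.equivFin.symm i).1.2, ?_⟩
  rw [hs, ← Finset.sum_coe_sort s,
    ← Equiv.sum_comp s.equivFin.symm (fun z => z.1.1 ⊗ₜ[ℂ] z.1.2)]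

theorem comulTwo_eq {H : Type} [Ring H] [HopfAlgebra ℂ H] (a : H) {m : ℕ}
    (a1 a2 a3 : Fin m → H)
    (h : (TensorProduct.map (Coalgebra.comul (R := ℂ)) LinearMap.id)
          (Coalgebra.comul (R := ℂ) a) = ∑ i, (a1 i ⊗ₜ[ℂ] a2 i) ⊗ₜ[ℂ] a3 i) :
    comulTwo H a = ∑ i, a2 i ⊗ₜ (a1 i ⊗ₜ a3 i) := by
  have hco := Coalgebra.coassoc_apply (R := ℂ) a
  have h' : LinearMap.rTensor H (Coalgebra.comul (R := ℂ)) (Coalgebra.comul (R := ℂ) a) =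
    ∑ i, (a1 i ⊗ₜ[ℂ] a2 i) ⊗ₜ[ℂ] a3 i := h
  rw [h'] at hco
  have h3 : comulTwo H a = TensorProduct.leftComm ℂ H H H
    (LinearMap.lTensor H (Coalgebra.comul (R := ℂ)) (Coalgebra.comul (R := ℂ) a)) := rfl
  rw [h3, ← hco]
  simp

variable {A B C}

/-- linear version of `actInd`. -/
def actL (π : A →ₐ[ℂ] B) (actC : C →ₗ[ℂ] B →ₗ[ℂ] C) : (C ⊗[ℂ] A) →ₗ[ℂ] A →ₗ[ℂ] C ⊗[ℂ] A :=
  TensorProduct.curry (ydMap (actC.compl₂ π.toLinearMap) ∘ₗ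
    TensorProduct.map LinearMap.id (comulTwo A))

theorem actInd_eq (π : A →ₐ[ℂ] B) (actC : C →ₗ[ℂ] B →ₗ[ℂ] C) (x : C ⊗[ℂ] A) (a : A) :
    actInd A B C π actC x a = actL π actC x a := by
  have : (TensorProduct.lift actC ∘ₗ TensorProduct.map LinearMap.id π.toLinearMap) =
      TensorProduct.lift (actC.compl₂ π.toLinearMap) := by
    ext c a
    simp
  unfold actInd actL ydMap
  rw [this]
  rfl

theorem actL_tmul (π : A →ₐ[ℂ] B) (actC : C →ₗ[ℂ] B →ₗ[ℂ] C) {n : ℕ} {u : Fin n → Fin n → A}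
    (hu : IsMC u) (c : C) (d : A) (i j : Fin n) :
    actL π actC (c ⊗ₜ d) (u i j) = ∑ k, ∑ l, actC c (π (u k l)) ⊗ₜ[ℂ]
      (HopfAlgebra.antipode (R := ℂ) (u i k) * d * u l j) := by
  simp [actL, hu.comulTwo, TensorProduct.tmul_sum, ydMap_tmul]

theorem IsMC.map {π : A →ₐ[ℂ] B}
    (hπcomul : ∀ a : A, Coalgebra.comul (R := ℂ) (π a) =
      TensorProduct.map π.toLinearMap π.toLinearMap (Coalgebra.comul (R := ℂ) a))
    (hπcounit : ∀ a : A, Coalgebra.counit (R := ℂ) (π a) = Coalgebra.counit (R := ℂ) a)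
    {n : ℕ} {u : Fin n → Fin n → A} (hu : IsMC u) : IsMC (fun i j => π (u i j)) := by
  refine ⟨fun i j => ?_, fun i j => ?_⟩
  · rw [hπcomul, hu.1]; simp
  · rw [hπcounit, hu.2]

/-- `z ↦ p z r` -/
def sandwich {H : Type} [Ring H] [Algebra ℂ H] (p r : H) : H →ₗ[ℂ] H :=
  LinearMap.mulRight ℂ r ∘ₗ LinearMap.mulLeft ℂ p

@[simp]
theorem sandwich_apply {H : Type} [Ring H] [Algebra ℂ H] (p r z : H) :
    sandwich p r z = p * z * r := rfl

theorem sum4_comm {n : ℕ} {M : Type} [AddCommMonoid M]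
    (f : Fin n → Fin n → Fin n → Fin n → M) :
    ∑ a, ∑ b, ∑ c, ∑ d, f a b c d = ∑ c, ∑ d, ∑ a, ∑ b, f a b c d := by
  calc _ = ∑ a, ∑ c, ∑ b, ∑ d, f a b c d :=
        Finset.sum_congr rfl fun _ _ => Finset.sum_comm
    _ = ∑ c, ∑ a, ∑ b, ∑ d, f a b c d := Finset.sum_comm
    _ = ∑ c, ∑ a, ∑ d, ∑ b, f a b c d :=
        Finset.sum_congr rfl fun _ _ => Finset.sum_congr rfl fun _ _ => Finset.sum_comm
    _ = _ := Finset.sum_congr rfl fun _ _ => Finset.sum_comm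

/-- The common form of `(id ⊗ Δ)(x ◁' u i j)`. -/
theorem comul_actL (π : A →ₐ[ℂ] B) (actC : C →ₗ[ℂ] B →ₗ[ℂ] C) {n : ℕ} {u : Fin n → Fin n → A}
    (hu : IsMC u) (x : C ⊗[ℂ] A) (i j : Fin n) :
    TensorProduct.map LinearMap.id (Coalgebra.comul (R := ℂ)) (actL π actC x (u i j)) =
    ∑ k, ∑ o, ∑ l, ∑ m, TensorProduct.map (actC.flip (π (u l m)))
      (TensorProduct.map (sandwich (HopfAlgebra.antipode (R := ℂ) (u k l)) (u m o))
        (sandwich (HopfAlgebra.antipode (R := ℂ) (u i k)) (u o j)))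
      (TensorProduct.map LinearMap.id (Coalgebra.comul (R := ℂ)) x) := by
  induction x using TensorProduct.induction_on with
  | zero => simp
  | add x y hx hy => simp only [map_add, LinearMap.add_apply, hx, hy, Finset.sum_add_distrib]
  | tmul c d =>
    rw [actL_tmul _ _ hu, sum4_comm]
    simp only [map_sum, TensorProduct.map_tmul, LinearMap.id_apply, Bialgebra.comul_mul,
      hu.comul_antipode, hu.1, LinearMap.flip_apply]
    refine Finset.sum_congr rfl fun l _ => Finset.sum_congr rfl fun m _ => ?_
    simp only [← TensorProduct.tmul_sum]
    congr 1
    generalize Coalgebra.comul (R := ℂ) d = t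
    induction t using TensorProduct.induction_on with
    | zero => simp
    | add x y hx hy => 
      simp only [map_add, Finset.sum_add_distrib, mul_add, add_mul, hx, hy]
    | tmul p q =>
      simp only [Finset.sum_mul, Finset.mul_sum, Algebra.TensorProduct.tmul_mul_tmul,
        TensorProduct.map_tmul, sandwich_apply]
      exact Finset.sum_comm

theorem yd_part (π : A →ₐ[ℂ] B) (actC : C →ₗ[ℂ] B →ₗ[ℂ] C) (x : C ⊗[ℂ] A) (a : A) :
    (TensorProduct.assoc ℂ C A A).symm
          ((TensorProduct.map LinearMap.id (Coalgebra.comul (R := ℂ)))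
            (actL π actC x a)) =
    ydMap (actL π actC) ((TensorProduct.assoc ℂ C A A).symm
          ((TensorProduct.map LinearMap.id (Coalgebra.comul (R := ℂ))) x) ⊗ₜ comulTwo A a) := by
  refine isMC_ext (f := (TensorProduct.assoc ℂ C A A).symm.toLinearMap ∘ₗ 
    (TensorProduct.map LinearMap.id (Coalgebra.comul (R := ℂ))) ∘ₗ actL π actC x)
    (g := ydMap (actL π actC) ∘ₗ TensorProduct.mk ℂ _ _ ((TensorProduct.assoc ℂ C A A).symm
      ((TensorProduct.map LinearMap.id (Coalgebra.comul (R := ℂ))) x)) ∘ₗ comulTwo A) ?_ a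
  intro n u hu i j
  simp only [LinearMap.comp_apply, LinearEquiv.coe_coe, comul_actL π actC hu, 
    TensorProduct.mk_apply, hu.comulTwo]
  generalize (TensorProduct.map LinearMap.id (Coalgebra.comul (R := ℂ))) x = t
  induction t using TensorProduct.induction_on with
  | zero => simp
  | add x y hx hy => simp only [map_add, Finset.sum_add_distrib, TensorProduct.add_tmul, hx, hy]
  | tmul c t =>
    induction t using TensorProduct.induction_on with
    | zero => simp
    | add x y hx hy => 
      simp only [map_add, Finset.sum_add_distrib, TensorProduct.add_tmul,
        TensorProduct.tmul_add, hx, hy]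
    | tmul p q =>
      simp [TensorProduct.tmul_sum, ydMap_tmul, actL_tmul _ _ hu, TensorProduct.sum_tmul]

theorem ind_part (π : A →ₐ[ℂ] B)
    (hπcomul : ∀ a : A, Coalgebra.comul (R := ℂ) (π a) =
      TensorProduct.map π.toLinearMap π.toLinearMap (Coalgebra.comul (R := ℂ) a))
    (hπcounit : ∀ a : A, Coalgebra.counit (R := ℂ) (π a) = Coalgebra.counit (R := ℂ) a)
    (hπantipode : ∀ a : A,
      HopfAlgebra.antipode (R := ℂ) (π a) = π (HopfAlgebra.antipode (R := ℂ) a))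
    (γ : C →ₐ[ℂ] C ⊗[ℂ] B) (actC : C →ₗ[ℂ] B →ₗ[ℂ] C)
    (hYD : ∀ c b, γ (actC c b) = ydMap actC (γ c ⊗ₜ comulTwo B b))
    (x : C ⊗[ℂ] A) (hx : x ∈ IndSub A B C π γ) (a : A) :
    actL π actC x a ∈ IndSub A B C π γ := by
  have hx' : (TensorProduct.assoc ℂ C B A) (TensorProduct.map γ.toLinearMap LinearMap.id x) =
    TensorProduct.map LinearMap.id
      (TensorProduct.map π.toLinearMap LinearMap.id ∘ₗ Coalgebra.comul (R := ℂ)) x := hx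
  refine isMC_ext (f := (TensorProduct.assoc ℂ C B A).toLinearMap ∘ₗ
      TensorProduct.map γ.toLinearMap LinearMap.id ∘ₗ actL π actC x)
    (g := TensorProduct.map LinearMap.id
      (TensorProduct.map π.toLinearMap LinearMap.id ∘ₗ Coalgebra.comul (R := ℂ)) ∘ₗ
        actL π actC x) ?_ a
  intro n u hu i j
  have hpu := hu.map hπcomul hπcounit
  have h1 : ∀ y : C ⊗[ℂ] A, (TensorProduct.assoc ℂ C B A)
      (TensorProduct.map γ.toLinearMap LinearMap.id (actL π actC y (u i j))) =
    ∑ k, ∑ o, ∑ l, ∑ m, TensorProduct.map (actC.flip (π (u l m)))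
      (TensorProduct.map (sandwich (π (HopfAlgebra.antipode (R := ℂ) (u k l))) (π (u m o)))
        (sandwich (HopfAlgebra.antipode (R := ℂ) (u i k)) (u o j)))
      ((TensorProduct.assoc ℂ C B A) (TensorProduct.map γ.toLinearMap LinearMap.id y)) := by
    intro y
    induction y using TensorProduct.induction_on with
    | zero => simp
    | add x y hx hy => simp only [map_add, LinearMap.add_apply, hx, hy, Finset.sum_add_distrib]
    | tmul c d =>
      rw [actL_tmul _ _ hu]
      simp only [map_sum, TensorProduct.map_tmul, LinearMap.id_apply, AlgHom.toLinearMap_apply,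
        hYD]
      refine Finset.sum_congr rfl fun k _ => Finset.sum_congr rfl fun m _ => ?_
      rw [hpu.comulTwo]
      generalize γ c = t
      induction t using TensorProduct.induction_on with
      | zero => simp
      | add x y hx hy => 
        simp only [map_add, Finset.sum_add_distrib, TensorProduct.add_tmul, hx, hy]
      | tmul p q =>
        simp [TensorProduct.tmul_sum, TensorProduct.sum_tmul, ydMap_tmul, hπantipode]
  have h2 : TensorProduct.map LinearMap.id
      (TensorProduct.map π.toLinearMap LinearMap.id ∘ₗ Coalgebra.comul (R := ℂ))
        (actL π actC x (u i j)) =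
    ∑ k, ∑ o, ∑ l, ∑ m, TensorProduct.map (actC.flip (π (u l m)))
      (TensorProduct.map (sandwich (π (HopfAlgebra.antipode (R := ℂ) (u k l))) (π (u m o)))
        (sandwich (HopfAlgebra.antipode (R := ℂ) (u i k)) (u o j)))
      (TensorProduct.map LinearMap.id
      (TensorProduct.map π.toLinearMap LinearMap.id ∘ₗ Coalgebra.comul (R := ℂ)) x) := by
    have e : ∀ y : C ⊗[ℂ] A, TensorProduct.map (LinearMap.id : C →ₗ[ℂ] C)
      (TensorProduct.map π.toLinearMap LinearMap.id ∘ₗ Coalgebra.comul (R := ℂ)) y =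
      TensorProduct.map LinearMap.id (TensorProduct.map π.toLinearMap LinearMap.id)
        (TensorProduct.map LinearMap.id (Coalgebra.comul (R := ℂ)) y) := by
      intro y
      rw [← LinearMap.comp_apply, ← TensorProduct.map_comp, LinearMap.id_comp]
    rw [e, e, comul_actL π actC hu]
    simp only [map_sum]
    generalize (TensorProduct.map LinearMap.id (Coalgebra.comul (R := ℂ))) x = t
    refine Finset.sum_congr rfl fun k _ => Finset.sum_congr rfl fun o _ =>
      Finset.sum_congr rfl fun l _ => Finset.sum_congr rfl fun m _ => ?_
    simp only [← LinearMap.comp_apply, ← TensorProduct.map_comp]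
    congr 1
    refine TensorProduct.ext' fun c t => ?_
    induction t using TensorProduct.induction_on with
    | zero => simp
    | add x y hx hy => simp only [TensorProduct.tmul_add, map_add, hx, hy]
    | tmul p q => simp
  have h3 := h1 x
  rw [hx', ← h2] at h3
  exact h3

theorem act_mul_part (π : A →ₐ[ℂ] B) (actC : C →ₗ[ℂ] B →ₗ[ℂ] C)
    (hact_mul : ∀ (c : C) (b b' : B), actC c (b * b') = actC (actC c b) b')
    (x : C ⊗[ℂ] A) (a a' : A) :
    actL π actC x (a * a') = actL π actC (actL π actC x a) a' := by
  have hc : comulTwo A (a * a') = comulTwo A a * comulTwo A a' := by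
    have e : ∀ b : A, comulTwo A b = Algebra.TensorProduct.leftComm ℂ A A A
      (Algebra.TensorProduct.map (AlgHom.id ℂ A) (Bialgebra.comulAlgHom ℂ A)
        (Bialgebra.comulAlgHom ℂ A b)) := fun b => rfl
    simp only [e, map_mul]
  have key : ∀ s t : A ⊗[ℂ] (A ⊗[ℂ] A),
     ydMap (actC.compl₂ π.toLinearMap) (x ⊗ₜ (s * t)) =
     ydMap (actC.compl₂ π.toLinearMap) (ydMap (actC.compl₂ π.toLinearMap) (x ⊗ₜ s) ⊗ₜ t) := by
    intro s t
    induction x using TensorProduct.induction_on with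
    | zero => simp
    | add x y hx hy => simp only [map_add, TensorProduct.add_tmul, hx, hy]
    | tmul c d =>
    induction s using TensorProduct.induction_on with
    | zero => simp
    | add x y hx hy => 
      simp only [map_add, TensorProduct.add_tmul, TensorProduct.tmul_add, add_mul, hx, hy]
    | tmul q s =>
    induction s using TensorProduct.induction_on with
    | zero => simp
    | add x y hx hy => 
      simp only [map_add, TensorProduct.add_tmul, TensorProduct.tmul_add, add_mul, hx, hy]
    | tmul p r =>
    induction t using TensorProduct.induction_on with
    | zero => simp
    | add x y hx hy => 
      simp only [map_add, TensorProduct.tmul_add, mul_add, hx, hy]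
    | tmul q' s =>
    induction s using TensorProduct.induction_on with
    | zero => simp
    | add x y hx hy => 
      simp only [map_add, TensorProduct.tmul_add, mul_add, hx, hy]
    | tmul p' r' =>
      simp [ydMap_tmul, hact_mul, HopfAlgebra.antipode_mul_antidistrib, mul_assoc]
  have := key (comulTwo A a) (comulTwo A a')
  rw [← hc] at this
  exact this

theorem act_one_part (π : A →ₐ[ℂ] B) (actC : C →ₗ[ℂ] B →ₗ[ℂ] C)
    (hact_one : ∀ c : C, actC c 1 = c)
    (x : C ⊗[ℂ] A) : actL π actC x 1 = x := by
  have h : ∀ x, actL π actC x 1 = ydMap (actC.compl₂ π.toLinearMap) (x ⊗ₜ comulTwo A 1) :=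
    fun _ => rfl
  have h1 : comulTwo A (1 : A) = 1 ⊗ₜ (1 ⊗ₜ 1) := by
    simp [comulTwo, Algebra.TensorProduct.one_def]
  induction x using TensorProduct.induction_on with
  | zero => simp
  | add x y hx hy => simp only [map_add, LinearMap.add_apply, hx, hy]
  | tmul c d => simp [h, h1, ydMap_tmul, hact_one]

theorem act_unit_part (π : A →ₐ[ℂ] B) (actC : C →ₗ[ℂ] B →ₗ[ℂ] C)
    (hπcounit : ∀ a : A, Coalgebra.counit (R := ℂ) (π a) = Coalgebra.counit (R := ℂ) a)
    (hact_unit : ∀ b : B, actC 1 b = Coalgebra.counit (R := ℂ) b • (1 : C))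
    (a : A) : actL π actC 1 a = Coalgebra.counit (R := ℂ) a • (1 : C ⊗[ℂ] A) := by
  refine isMC_ext (f := actL π actC 1)
    (g := (Coalgebra.counit (R := ℂ) (A := A)).smulRight (1 : C ⊗[ℂ] A)) ?_ a
  intro n u hu i j
  rw [Algebra.TensorProduct.one_def, actL_tmul _ _ hu]
  simp only [hact_unit, hπcounit, hu.2, LinearMap.smulRight_apply, mul_one, ite_smul, one_smul,
    zero_smul]
  have : ∀ k l, (if k = l then (1:C) else 0) ⊗ₜ[ℂ]
      (HopfAlgebra.antipode (R := ℂ) (u i k) * u l j) = if k = l then (1 : C) ⊗ₜ[ℂ]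
      (HopfAlgebra.antipode (R := ℂ) (u i k) * u l j) else 0 := by
    intro k l; split_ifs <;> simp
  simp only [this, Finset.sum_ite_eq, Finset.mem_univ, if_true, ← TensorProduct.tmul_sum,
    hu.antipode_mul]
  split_ifs <;> simp

theorem act_prod_part (π : A →ₐ[ℂ] B) (actC : C →ₗ[ℂ] B →ₗ[ℂ] C)
    (hact_prod : ∀ {n : ℕ} {u : Fin n → Fin n → A}, IsMC u → ∀ (c c' : C) i j,
      actC (c * c') (π (u i j)) = ∑ k, actC c (π (u i k)) * actC c' (π (u k j)))
    (x y : C ⊗[ℂ] A) (a : A) :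
    actL π actC (x * y) a = LinearMap.mul' ℂ (C ⊗[ℂ] A) (TensorProduct.map (actL π actC x)
      (actL π actC y) (Coalgebra.comul (R := ℂ) a)) := by
  refine isMC_ext (f := actL π actC (x * y))
    (g := LinearMap.mul' ℂ (C ⊗[ℂ] A) ∘ₗ TensorProduct.map (actL π actC x)
      (actL π actC y) ∘ₗ Coalgebra.comul (R := ℂ)) ?_ a
  intro n u hu i j
  simp only [LinearMap.comp_apply, hu.1, map_sum, TensorProduct.map_tmul, LinearMap.mul'_apply]
  induction x using TensorProduct.induction_on with
  | zero => simp
  | add x y hx hy => 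
    simp only [map_add, LinearMap.add_apply, add_mul, Finset.sum_add_distrib, hx, hy]
  | tmul c d =>
  induction y using TensorProduct.induction_on with
  | zero => simp
  | add x y hx hy => 
    simp only [map_add, LinearMap.add_apply, mul_add, Finset.sum_add_distrib, hx, hy]
  | tmul c' d' =>
    simp only [Algebra.TensorProduct.tmul_mul_tmul, actL_tmul _ _ hu, hact_prod hu]
    -- right: sum over m, k, l, k', l' of
    -- c◁u k l * c'◁u k' l' ⊗ S(u i k) d (u l m) S(u m k') d' (u l' j)
    have e1 : ∀ k l k' l', ∑ m, (actC c (π (u k l)) * actC c' (π (u k' l'))) ⊗ₜ[ℂ]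
        (HopfAlgebra.antipode (R := ℂ) (u i k) * d * u l m *
          (HopfAlgebra.antipode (R := ℂ) (u m k') * d' * u l' j)) =
        if l = k' then (actC c (π (u k l)) * actC c' (π (u k' l'))) ⊗ₜ[ℂ]
        (HopfAlgebra.antipode (R := ℂ) (u i k) * (d * d') * u l' j) else 0 := by
      intro k l k' l'
      rw [← TensorProduct.tmul_sum]
      have : ∑ m, (HopfAlgebra.antipode (R := ℂ) (u i k) * d * u l m *
          (HopfAlgebra.antipode (R := ℂ) (u m k') * d' * u l' j)) =
          HopfAlgebra.antipode (R := ℂ) (u i k) * d *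
            (∑ m, u l m * HopfAlgebra.antipode (R := ℂ) (u m k')) * d' * u l' j := by
        simp only [Finset.mul_sum, Finset.sum_mul, mul_assoc]
      rw [this, hu.mul_antipode]
      split_ifs <;> simp [mul_assoc]
    simp only [Finset.sum_mul_sum, Algebra.TensorProduct.tmul_mul_tmul]
    symm
    calc _ = ∑ k, ∑ k', ∑ l, ∑ l', ∑ m, (actC c (π (u k l)) * actC c' (π (u k' l'))) ⊗ₜ[ℂ]
        (HopfAlgebra.antipode (R := ℂ) (u i k) * d * u l m *
          (HopfAlgebra.antipode (R := ℂ) (u m k') * d' * u l' j)) := by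
          rw [Finset.sum_comm]
          refine Finset.sum_congr rfl fun k _ => ?_
          rw [Finset.sum_comm]
          refine Finset.sum_congr rfl fun k' _ => ?_
          rw [Finset.sum_comm]
          refine Finset.sum_congr rfl fun l _ => ?_
          rw [Finset.sum_comm]
      _ = _ := by
          simp only [e1, TensorProduct.sum_tmul]
          refine Finset.sum_congr rfl fun k _ => ?_
          rw [Finset.sum_comm]
          trans ∑ l, ∑ l', ∑ k', if l = k' then (actC c (π (u k l)) * actC c' (π (u k' l'))) ⊗ₜ[ℂ]
            (HopfAlgebra.antipode (R := ℂ) (u i k) * (d * d') * u l' j) else 0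
          · exact Finset.sum_congr rfl fun l _ => Finset.sum_comm
          simp only [Finset.sum_ite_eq, Finset.mem_univ, if_true]
          rw [Finset.sum_comm]

/-- `z ⊗ a ↦ z (x ◁' a)`. -/
def brMap (π : A →ₐ[ℂ] B) (actC : C →ₗ[ℂ] B →ₗ[ℂ] C) (x : C ⊗[ℂ] A) :
    (C ⊗[ℂ] A) ⊗[ℂ] A →ₗ[ℂ] C ⊗[ℂ] A :=
  LinearMap.mul' ℂ (C ⊗[ℂ] A) ∘ₗ TensorProduct.map LinearMap.id (actL π actC x)

/-- `c' ⊗ (b ⊗ d') ↦ c' (c ◁ b) ⊗ d d'`. -/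
def brMap2 (actC : C →ₗ[ℂ] B →ₗ[ℂ] C) (c : C) (d : A) :
    C ⊗[ℂ] (B ⊗[ℂ] A) →ₗ[ℂ] C ⊗[ℂ] A :=
  TensorProduct.map (LinearMap.mul' ℂ C ∘ₗ TensorProduct.map LinearMap.id (actC c))
    (LinearMap.mulLeft ℂ d) ∘ₗ (TensorProduct.assoc ℂ C B A).symm.toLinearMap

theorem br_part (π : A →ₐ[ℂ] B) (actC : C →ₗ[ℂ] B →ₗ[ℂ] C) (γ : C →ₐ[ℂ] C ⊗[ℂ] B)
    (hbr : ∀ c c' : C, c * c' = LinearMap.mul' ℂ C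
      (TensorProduct.map LinearMap.id (actC c) (γ c')))
    (x y : C ⊗[ℂ] A) (hy : y ∈ IndSub A B C π γ) :
    x * y = brMap π actC x ((TensorProduct.assoc ℂ C A A).symm
            ((TensorProduct.map LinearMap.id (Coalgebra.comul (R := ℂ))) y)) := by
  have hy' : (TensorProduct.assoc ℂ C B A) (TensorProduct.map γ.toLinearMap LinearMap.id y) =
    TensorProduct.map LinearMap.id
      (TensorProduct.map π.toLinearMap LinearMap.id ∘ₗ Coalgebra.comul (R := ℂ)) y := hy
  induction x using TensorProduct.induction_on with
  | zero => simp [brMap]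
  | add x x' hx hx' =>
    have : brMap π actC (x + x') = brMap π actC x + brMap π actC x' := by
      simp only [brMap, map_add, TensorProduct.map_add_right, LinearMap.comp_add]
    rw [this, LinearMap.add_apply, add_mul, hx, hx']
  | tmul c d =>
    have h1 : ∀ y : C ⊗[ℂ] A, (c ⊗ₜ[ℂ] d) * y = brMap2 actC c d ((TensorProduct.assoc ℂ C B A)
        (TensorProduct.map γ.toLinearMap LinearMap.id y)) := by
      intro y
      induction y using TensorProduct.induction_on with
      | zero => simp
      | add x y hx hy => simp only [map_add, mul_add, hx, hy]
      | tmul c' d' =>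
        simp [brMap2, hbr c c']
    rw [h1, hy']
    clear hy hy' h1
    induction y using TensorProduct.induction_on with
    | zero => simp
    | add x y hx hy => simp only [map_add, hx, hy]
    | tmul c' d' =>
      refine isMC_ext (f := brMap2 actC c d ∘ₗ TensorProduct.map LinearMap.id
          (TensorProduct.map π.toLinearMap LinearMap.id ∘ₗ Coalgebra.comul (R := ℂ)) ∘ₗ
          TensorProduct.mk ℂ C A c') (g := brMap π actC (c ⊗ₜ d) ∘ₗ
          (TensorProduct.assoc ℂ C A A).symm.toLinearMap ∘ₗ
            (TensorProduct.map LinearMap.id (Coalgebra.comul (R := ℂ))) ∘ₗ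
          TensorProduct.mk ℂ C A c') ?_ d'
      intro n u hu i j
      simp only [LinearMap.comp_apply, TensorProduct.mk_apply, TensorProduct.map_tmul, hu.1,
        LinearMap.id_apply, map_sum, TensorProduct.tmul_sum, LinearEquiv.coe_coe,
        TensorProduct.assoc_symm_tmul, brMap, brMap2, LinearMap.mul'_apply, actL_tmul _ _ hu,
        AlgHom.toLinearMap_apply, LinearMap.mulLeft_apply, Finset.mul_sum,
        Algebra.TensorProduct.tmul_mul_tmul]
      have e1 : ∀ k l, ∑ m, (c' * actC c (π (u k l))) ⊗ₜ[ℂ]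
          (u i m * (HopfAlgebra.antipode (R := ℂ) (u m k) * d * u l j)) =
          if i = k then (c' * actC c (π (u k l))) ⊗ₜ[ℂ] (d * u l j) else 0 := by
        intro k l
        rw [← TensorProduct.tmul_sum]
        simp only [← mul_assoc, ← Finset.sum_mul, hu.mul_antipode]
        split_ifs <;> simp
      symm
      trans ∑ l, ∑ k, ∑ m, (c' * actC c (π (u k l))) ⊗ₜ[ℂ]
          (u i m * (HopfAlgebra.antipode (R := ℂ) (u m k) * d * u l j))
      · rw [Finset.sum_comm]
        trans ∑ k, ∑ l, ∑ m, (c' * actC c (π (u k l))) ⊗ₜ[ℂ]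
          (u i m * (HopfAlgebra.antipode (R := ℂ) (u m k) * d * u l j))
        · exact Finset.sum_congr rfl fun k _ => Finset.sum_comm
        · exact Finset.sum_comm
      · simp only [e1, Finset.sum_ite_eq, Finset.mem_univ, if_true]

end YD

/-- induction of (braided commutative) Yetter–Drinfeld algebras.
Given a surjective morphism `π : A → B` of Hopf *-algebras with `S_A² = id` and a
`B`-Yetter–Drinfeld algebra `(C, ◁, γ)`, the operation
`(c ⊗ a') ◁' a = (c ◁ π(a₍₂₎)) ⊗ S_A(a₍₁₎) a' a₍₃₎` maps `Ind(C) ⊗ A` into `Ind(C)`,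
makes `Ind(C)` a right `A`-module algebra, and `(Ind(C), ◁', id ⊗ Δ_A)` satisfies the
Yetter–Drinfeld condition over `A`; if `(C, ◁, γ)` is braided commutative then so is
`(Ind(C), ◁', id ⊗ Δ_A)`.  (Sweedler-type identities are stated for every
decomposition into sums of simple tensors.) -/
theorem induced_yetter_drinfeld
    [StarRing A] [StarModule ℂ A] [StarRing B] [StarModule ℂ B]
    [StarRing C] [StarModule ℂ C]
    -- Hopf *-algebra structures:
    (hAstar : ∀ a : A,
      Coalgebra.comul (R := ℂ) (star a) = starT A A (Coalgebra.comul (R := ℂ) a))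
    (hBstar : ∀ b : B,
      Coalgebra.comul (R := ℂ) (star b) = starT B B (Coalgebra.comul (R := ℂ) b))
    (hSA2 : ∀ a : A,
      HopfAlgebra.antipode (R := ℂ) (HopfAlgebra.antipode (R := ℂ) a) = a)
    -- the surjective Hopf *-algebra morphism π:
    (π : A →ₐ[ℂ] B) (hπsurj : Function.Surjective π)
    (hπcomul : ∀ a : A, Coalgebra.comul (R := ℂ) (π a) =
      TensorProduct.map π.toLinearMap π.toLinearMap (Coalgebra.comul (R := ℂ) a))
    (hπcounit : ∀ a : A, Coalgebra.counit (R := ℂ) (π a) = Coalgebra.counit (R := ℂ) a)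
    (hπantipode : ∀ a : A,
      HopfAlgebra.antipode (R := ℂ) (π a) = π (HopfAlgebra.antipode (R := ℂ) a))
    (hπstar : ∀ a : A, π (star a) = star (π a))
    -- the right B-comodule *-algebra structure γ on C:
    (γ : C →ₐ[ℂ] C ⊗[ℂ] B)
    (hγcoassoc : ∀ c : C,
      (TensorProduct.assoc ℂ C B B)
          ((TensorProduct.map γ.toLinearMap LinearMap.id) (γ c)) =
        (TensorProduct.map LinearMap.id (Coalgebra.comul (R := ℂ))) (γ c))
    (hγcounit : ∀ c : C,
      (TensorProduct.rid ℂ C)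
          ((TensorProduct.map LinearMap.id (Coalgebra.counit (R := ℂ))) (γ c)) = c)
    (hγstar : ∀ c : C, γ (star c) = starT C B (γ c))
    -- the right B-module *-algebra structure ◁ on C:
    (actC : C →ₗ[ℂ] B →ₗ[ℂ] C)
    (hact_mul : ∀ (c : C) (b b' : B), actC c (b * b') = actC (actC c b) b')
    (hact_one : ∀ c : C, actC c 1 = c)
    (hact_prod : ∀ (c c' : C) (b : B) (m : ℕ) (b1 b2 : Fin m → B),
      Coalgebra.comul (R := ℂ) b = ∑ i, b1 i ⊗ₜ b2 i →
      actC (c * c') b = ∑ i, actC c (b1 i) * actC c' (b2 i))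
    (hact_unit : ∀ b : B, actC 1 b = Coalgebra.counit (R := ℂ) b • (1 : C))
    (hact_star : ∀ (c : C) (b : B),
      star (actC c b) = actC (star c) (star (HopfAlgebra.antipode (R := ℂ) b)))
    -- the Yetter–Drinfeld condition for (C, ◁, γ):
    (hYD : ∀ (c : C) (b : B) (m m' : ℕ) (b1 b2 b3 : Fin m → B)
        (c0 : Fin m' → C) (c1 : Fin m' → B),
      (TensorProduct.map (Coalgebra.comul (R := ℂ)) LinearMap.id)
          (Coalgebra.comul (R := ℂ) b) = ∑ i, (b1 i ⊗ₜ b2 i) ⊗ₜ b3 i →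
      γ c = ∑ j, c0 j ⊗ₜ c1 j →
      γ (actC c b) = ∑ i, ∑ j, actC (c0 j) (b2 i) ⊗ₜ
        (HopfAlgebra.antipode (R := ℂ) (b1 i) * c1 j * b3 i)) :
    -- ◁' maps Ind(C) ⊗ A into Ind(C):
    (∀ x ∈ IndSub A B C π γ, ∀ a : A, actInd A B C π actC x a ∈ IndSub A B C π γ) ∧
    -- Ind(C) is a right A-module algebra:
    (∀ (x : C ⊗[ℂ] A) (a a' : A),
      actInd A B C π actC x (a * a') = actInd A B C π actC (actInd A B C π actC x a) a') ∧
    (∀ x : C ⊗[ℂ] A, actInd A B C π actC x 1 = x) ∧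
    (∀ (x y : C ⊗[ℂ] A) (a : A) (m : ℕ) (a1 a2 : Fin m → A),
      Coalgebra.comul (R := ℂ) a = ∑ i, a1 i ⊗ₜ a2 i →
      actInd A B C π actC (x * y) a =
        ∑ i, actInd A B C π actC x (a1 i) * actInd A B C π actC y (a2 i)) ∧
    (∀ a : A, actInd A B C π actC 1 a =
      Coalgebra.counit (R := ℂ) a • (1 : C ⊗[ℂ] A)) ∧
    -- the Yetter–Drinfeld condition over A:
    (∀ (x : C ⊗[ℂ] A) (a : A) (m m' : ℕ) (a1 a2 a3 : Fin m → A)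
        (x0 : Fin m' → C ⊗[ℂ] A) (x1 : Fin m' → A),
      x ∈ IndSub A B C π γ →
      (TensorProduct.map (Coalgebra.comul (R := ℂ)) LinearMap.id)
          (Coalgebra.comul (R := ℂ) a) = ∑ i, (a1 i ⊗ₜ a2 i) ⊗ₜ a3 i →
      (TensorProduct.assoc ℂ C A A).symm
          ((TensorProduct.map LinearMap.id (Coalgebra.comul (R := ℂ))) x) =
        ∑ j, x0 j ⊗ₜ x1 j →
      (TensorProduct.assoc ℂ C A A).symm
          ((TensorProduct.map LinearMap.id (Coalgebra.comul (R := ℂ)))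
            (actInd A B C π actC x a)) =
        ∑ i, ∑ j, (actInd A B C π actC (x0 j) (a2 i)) ⊗ₜ
          (HopfAlgebra.antipode (R := ℂ) (a1 i) * x1 j * a3 i)) ∧
    -- braided commutativity is inherited:
    ((∀ (c c' : C) (m' : ℕ) (c0 : Fin m' → C) (c1 : Fin m' → B),
        γ c' = ∑ j, c0 j ⊗ₜ c1 j → c * c' = ∑ j, c0 j * actC c (c1 j)) →
      ∀ (x y : C ⊗[ℂ] A) (m' : ℕ) (y0 : Fin m' → C ⊗[ℂ] A) (y1 : Fin m' → A),
        x ∈ IndSub A B C π γ → y ∈ IndSub A B C π γ →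
        (TensorProduct.assoc ℂ C A A).symm
            ((TensorProduct.map LinearMap.id (Coalgebra.comul (R := ℂ))) y) =
          ∑ j, y0 j ⊗ₜ y1 j →
        x * y = ∑ j, y0 j * actInd A B C π actC x (y1 j)) := by
  have hYD' : ∀ c b, γ (actC c b) = ydMap actC (γ c ⊗ₜ comulTwo B b) := by
    intro c b
    obtain ⟨m', c0, c1, hc⟩ := exists_fin_tmul (γ c)
    have hb : ∃ (m : ℕ) (b1 b2 b3 : Fin m → B),
      (TensorProduct.map (Coalgebra.comul (R := ℂ)) LinearMap.id)
          (Coalgebra.comul (R := ℂ) b) = ∑ i, (b1 i ⊗ₜ[ℂ] b2 i) ⊗ₜ[ℂ] b3 i := by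
      generalize (TensorProduct.map (Coalgebra.comul (R := ℂ)) LinearMap.id)
          (Coalgebra.comul (R := ℂ) b) = t
      induction t using TensorProduct.induction_on with
      | zero => exact ⟨0, 0, 0, 0, by simp⟩
      | tmul s r =>
        obtain ⟨m, p, q, rfl⟩ := exists_fin_tmul s
        exact ⟨m, p, q, fun _ => r, by rw [TensorProduct.sum_tmul]⟩
      | add x y hx hy =>
        obtain ⟨m, p, q, r, rfl⟩ := hx
        obtain ⟨m', p', q', r', rfl⟩ := hy
        exact ⟨m + m', Fin.append p p', Fin.append q q', Fin.append r r', by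
          simp [Fin.sum_univ_add]⟩
    obtain ⟨m, b1, b2, b3, hb⟩ := hb
    rw [hYD c b m m' b1 b2 b3 c0 c1 hb hc, comulTwo_eq b b1 b2 b3 hb, hc]
    simp only [TensorProduct.tmul_sum, TensorProduct.sum_tmul, map_sum, ydMap_tmul]
  simp only [actInd_eq]
  refine ⟨fun x hx a => ind_part π hπcomul hπcounit hπantipode γ actC hYD' x hx a,
    act_mul_part π actC hact_mul, act_one_part π actC hact_one, ?_,
    act_unit_part π actC hπcounit hact_unit, ?_, ?_⟩
  · intro x y a m a1 a2 ha
    rw [act_prod_part π actC (fun hu c c' i j =>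
      hact_prod c c' _ _ _ _ ((hu.map hπcomul hπcounit).1 i j)) x y a, ha]
    simp
  · intro x a m m' a1 a2 a3 x0 x1 _ ha hx
    rw [yd_part, hx, comulTwo_eq a a1 a2 a3 ha]
    simp only [TensorProduct.tmul_sum, TensorProduct.sum_tmul, map_sum, ydMap_tmul]
  · intro hbr x y m' y0 y1 _ hy h
    have hbr' : ∀ c c' : C, c * c' = LinearMap.mul' ℂ C
        (TensorProduct.map LinearMap.id (actC c) (γ c')) := by
      intro c c'
      obtain ⟨m', c0, c1, hc⟩ := exists_fin_tmul (γ c')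
      rw [hbr c c' m' c0 c1 hc, hc]
      simp
    rw [br_part π actC γ hbr' x y hy, h]
    simp [brMap]

end
end
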